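/- Let γ > 1 be a real number, let n₀, m₀ be coprime positive integers, and set α = γ^{−n₀}, β = γ^{−m₀}; assume 0 < α, β < 1/2 and τ(C_α)·τ(C_β) < 1. Then C_α + C_β = [0, 2] if and only if there exists an integer n with −m₀ + 1 ≤ n ≤ n₀ and log((1−2β)/α)/log γ ≤ n ≤ 1 − log((1−2α)/β)/log γ. -/

import Mathlib

/-!
A point of `C_a` below `a ^ k * (1 - a)` is at most `a ^ (k + 1)`. Hence, if
`β ^ (l + 1) < α ^ k * (1 - 2 * α)` and `α ^ (k + 1) < β ^ l * (1 - 2 * β)`, then `C_α + C_β` has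
a gap just to the right of `α ^ (k + 1) + β ^ (l + 1)`. With `j = n₀ * k - m₀ * l`, which takes
every integer value because `n₀` and `m₀` are coprime, these inequalities read
`γ ^ j * β < 1 - 2 * α` and `α < γ ^ j * (1 - 2 * β)`. So if there is no gap, then the least
`n > -m₀` with `γ ^ (-n) * (1 - 2 * β) ≤ α` also satisfies `1 - 2 * α ≤ γ ^ (1 - n) * β`.

Conversely, given `n`, consider the sums `C_α + γ ^ j C_β` for `1 - n - m₀ ≤ j ≤ n₀ - n`.
Splitting `C_α` into its two halves replaces `j` by `j + n₀`, splitting `C_β` replaces `j` by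
`j - m₀`. In this range the hulls of the two pieces always cover the hull, and the first splitting
(if `j ≤ -n`) or the second (if `j > -n`) stays in the range. The squared distance of a point of
the hull from the sum, divided by `γ ^ j`, is contracted by both splittings, so the sum is dense in
its hull; it is also compact.
-/

open Set MeasureTheory

/-- The middle Cantor set `C_a`, for `0 < a < 1/2`:
`C_a = { (1-a) * ∑ εₖ aᵏ : εₖ ∈ {0,1} }`. -/
noncomputable def middleCantor (a : ℝ) : Set ℝ :=
  {x : ℝ | ∃ ε : ℕ → Bool, x = (1 - a) * ∑' k : ℕ, (if ε k then a ^ k else 0)}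

/-- The arithmetic difference `C_a - l · C_b`. -/
noncomputable def diffSet (a b l : ℝ) : Set ℝ :=
  {z : ℝ | ∃ x ∈ middleCantor a, ∃ y ∈ middleCantor b, z = x - l * y}


/-- The arithmetic sum `C_a + C_b`. -/
noncomputable def sumSet (a b : ℝ) : Set ℝ :=
  {z : ℝ | ∃ x ∈ middleCantor a, ∃ y ∈ middleCantor b, z = x + y}

section CantorCoding

variable {a : ℝ}

/-- The coding map of the middle Cantor set, sending a digit sequence to the point of `C_a` with
these digits. -/
noncomputable def cantorCoding (a : ℝ) (ε : ℕ → Bool) : ℝ :=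
  (1 - a) * ∑' k : ℕ, (if ε k then a ^ k else 0)

lemma middleCantor_eq_range : middleCantor a = range (cantorCoding a) := by
  ext x
  simp only [middleCantor, cantorCoding, mem_ofPred_eq, mem_range, eq_comm]

lemma cantorCoding_mem (ε : ℕ → Bool) : cantorCoding a ε ∈ middleCantor a := ⟨ε, rfl⟩

lemma norm_ite_pow_le (d : Bool) (k : ℕ) : ‖(if d then a ^ k else 0 : ℝ)‖ ≤ |a| ^ k := by
  cases d <;> simp

lemma summable_ite_pow (ha : |a| < 1) (ε : ℕ → Bool) :
    Summable fun k : ℕ ↦ (if ε k then a ^ k else 0 : ℝ) :=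
  .of_norm_bounded (summable_geometric_of_lt_one (abs_nonneg a) ha) fun k ↦ norm_ite_pow_le (ε k) k

lemma continuous_cantorCoding (ha : |a| < 1) : Continuous (cantorCoding a) := by
  refine continuous_const.mul (continuous_tsum (fun k ↦ ?_)
    (summable_geometric_of_lt_one (abs_nonneg a) ha) fun k ε ↦ norm_ite_pow_le (ε k) k)
  exact (continuous_of_discreteTopology (f := fun d : Bool ↦ (if d then a ^ k else 0 : ℝ))).comp
    (continuous_apply k)

lemma cantorCoding_eq_mul_add (ha : |a| < 1) (ε : ℕ → Bool) :
    cantorCoding a ε = a * cantorCoding a (fun k ↦ ε (k + 1)) + if ε 0 then 1 - a else 0 := by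
  have htail : ∑' k : ℕ, (if ε (k + 1) then a ^ (k + 1) else 0 : ℝ) =
      a * ∑' k : ℕ, (if ε (k + 1) then a ^ k else 0) := by
    simp only [← tsum_mul_left, mul_ite, mul_zero, pow_succ']
  rw [cantorCoding, cantorCoding, (summable_ite_pow ha ε).tsum_eq_zero_add, htail]
  split_ifs <;> ring

lemma cantorCoding_mem_Icc (ha₀ : 0 ≤ a) (ha : a < 1) (ε : ℕ → Bool) :
    cantorCoding a ε ∈ Icc 0 1 := by
  have ha' : 0 < 1 - a := sub_pos.2 ha
  have hsum_le : ∑' k : ℕ, (if ε k then a ^ k else 0 : ℝ) ≤ (1 - a)⁻¹ := by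
    rw [← tsum_geometric_of_lt_one ha₀ ha]
    refine (summable_ite_pow (by rwa [abs_of_nonneg ha₀]) ε).tsum_le_tsum (fun k ↦ ?_)
      (summable_geometric_of_lt_one ha₀ ha)
    split_ifs
    exacts [le_rfl, pow_nonneg ha₀ k]
  constructor
  · refine mul_nonneg ha'.le (tsum_nonneg fun k ↦ ?_)
    split_ifs <;> positivity
  · calc cantorCoding a ε ≤ (1 - a) * (1 - a)⁻¹ := mul_le_mul_of_nonneg_left hsum_le ha'.le
      _ = 1 := mul_inv_cancel₀ ha'.ne'

end CantorCoding

section MiddleCantor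

variable {a x : ℝ}

lemma isCompact_middleCantor (ha : |a| < 1) : IsCompact (middleCantor a) := by
  rw [middleCantor_eq_range]
  exact isCompact_range (continuous_cantorCoding ha)

lemma middleCantor_subset_Icc (ha₀ : 0 ≤ a) (ha : a < 1) : middleCantor a ⊆ Icc 0 1 := by
  rw [middleCantor_eq_range]
  exact range_subset_iff.2 (cantorCoding_mem_Icc ha₀ ha)

lemma zero_mem_middleCantor : (0 : ℝ) ∈ middleCantor a :=
  ⟨fun _ ↦ false, by simp⟩

lemma mem_middleCantor_iff_exists_mul_add (ha : |a| < 1) :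
    x ∈ middleCantor a ↔
      ∃ c ∈ ({0, 1 - a} : Set ℝ), ∃ y ∈ middleCantor a, x = a * y + c := by
  constructor
  · rintro ⟨ε, rfl⟩
    refine ⟨if ε 0 then 1 - a else 0, ?_, _, cantorCoding_mem _, cantorCoding_eq_mul_add ha ε⟩
    cases ε 0 <;> simp
  · rintro ⟨c, hc, _, ⟨ε, rfl⟩, rfl⟩
    obtain ⟨d, rfl⟩ : ∃ d : Bool, c = if d then 1 - a else 0 := by
      rcases hc with rfl | rfl
      exacts [⟨false, by simp⟩, ⟨true, by simp⟩]
    let digits : ℕ → Bool := fun k ↦ Nat.casesOn k d ε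
    exact ⟨digits, (cantorCoding_eq_mul_add ha digits).symm⟩

lemma le_pow_succ_of_mem_middleCantor_of_lt (ha₀ : 0 ≤ a) (ha : a < 1) {k : ℕ}
    (hx : x ∈ middleCantor a) (hlt : x < a ^ k * (1 - a)) : x ≤ a ^ (k + 1) := by
  have ha' : |a| < 1 := by rwa [abs_of_nonneg ha₀]
  induction k generalizing x with
  | zero =>
    obtain ⟨c, rfl | rfl, y, hy, rfl⟩ := (mem_middleCantor_iff_exists_mul_add ha').1 hx
    · rw [zero_add, pow_one, add_zero]
      exact mul_le_of_le_one_right ha₀ (middleCantor_subset_Icc ha₀ ha hy).2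
    · have hy₀ := (middleCantor_subset_Icc ha₀ ha hy).1
      rw [pow_zero, one_mul] at hlt
      exact absurd hlt (le_add_of_nonneg_left (mul_nonneg ha₀ hy₀)).not_gt
  | succ k ih =>
    obtain ⟨c, rfl | rfl, y, hy, rfl⟩ := (mem_middleCantor_iff_exists_mul_add ha').1 hx
    · rw [pow_succ', mul_assoc, add_zero] at hlt
      rw [pow_succ', add_zero]
      exact mul_le_mul_of_nonneg_left (ih hy (lt_of_mul_lt_mul_left hlt ha₀)) ha₀
    · have hy₀ := (middleCantor_subset_Icc ha₀ ha hy).1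
      have hpow : a ^ (k + 1) * (1 - a) ≤ 1 - a :=
        mul_le_of_le_one_left (sub_nonneg.2 ha.le) (pow_le_one₀ ha₀ ha.le)
      linarith [mul_nonneg ha₀ hy₀]

end MiddleCantor

section Gaps

variable {a b : ℝ}

lemma disjoint_sumSet_Ioo (ha₀ : 0 ≤ a) (ha : a < 1) (hb₀ : 0 ≤ b) (hb : b < 1) (k l : ℕ) :
    Disjoint (sumSet a b)
      (Ioo (a ^ (k + 1) + b ^ (l + 1)) (min (a ^ k * (1 - a)) (b ^ l * (1 - b)))) := by
  rw [disjoint_left]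
  rintro _ ⟨x, hx, y, hy, rfl⟩ ⟨hleft, hright⟩
  obtain ⟨hxa, hyb⟩ := lt_min_iff.1 hright
  have hx₀ := (middleCantor_subset_Icc ha₀ ha hx).1
  have hy₀ := (middleCantor_subset_Icc hb₀ hb hy).1
  have hx_le := le_pow_succ_of_mem_middleCantor_of_lt ha₀ ha (k := k) hx (by linarith)
  have hy_le := le_pow_succ_of_mem_middleCantor_of_lt hb₀ hb (k := l) hy (by linarith)
  linarith

lemma le_or_le_of_Icc_subset_sumSet (ha₀ : 0 ≤ a) (ha : a < 1) (hb₀ : 0 ≤ b) (hb : b < 1)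
    (hfull : Icc 0 2 ⊆ sumSet a b) (k l : ℕ) :
    b ^ l * (1 - 2 * b) ≤ a ^ (k + 1) ∨ a ^ k * (1 - 2 * a) ≤ b ^ (l + 1) := by
  by_contra! ⟨hb_lt, ha_lt⟩
  obtain ⟨t, ht, ht'⟩ : (Ioo (a ^ (k + 1) + b ^ (l + 1))
      (min (a ^ k * (1 - a)) (b ^ l * (1 - b)))).Nonempty := by
    rw [nonempty_Ioo, lt_min_iff, pow_succ, pow_succ]
    rw [pow_succ] at ha_lt hb_lt
    constructor <;> linarith
  have ht₀ : 0 ≤ t := (by positivity : 0 ≤ a ^ (k + 1) + b ^ (l + 1)).trans ht.le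
  have ht₂ : t ≤ 2 := by
    have hak : a ^ k * (1 - a) ≤ 1 :=
      mul_le_one₀ (pow_le_one₀ ha₀ ha.le) (sub_nonneg.2 ha.le) (sub_le_self 1 ha₀)
    linarith [(lt_min_iff.1 ht').1]
  exact disjoint_left.1 (disjoint_sumSet_Ioo ha₀ ha hb₀ hb k l) (hfull ⟨ht₀, ht₂⟩) ⟨ht, ht'⟩

end Gaps

/-- The sum `C_a + s C_b`, with convex hull `[0, 1 + s]` for `s ≥ 0`. Splitting one of the two
Cantor sets into its halves gives affine copies of such sums, with `s` replaced by `s / a` or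
`b * s`. -/
def scaledSum (a b s : ℝ) : Set ℝ :=
  {z : ℝ | ∃ x ∈ middleCantor a, ∃ y ∈ middleCantor b, z = x + s * y}

section ScaledSum

variable {a b s z c : ℝ}

lemma scaledSum_one : scaledSum a b 1 = sumSet a b := by
  simp only [scaledSum, sumSet, one_mul]

lemma zero_mem_scaledSum : 0 ∈ scaledSum a b s :=
  ⟨0, zero_mem_middleCantor, 0, zero_mem_middleCantor, by ring⟩

lemma scaledSum_subset_Icc (ha₀ : 0 ≤ a) (ha : a < 1) (hb₀ : 0 ≤ b) (hb : b < 1) (hs : 0 ≤ s) :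
    scaledSum a b s ⊆ Icc 0 (1 + s) := by
  rintro _ ⟨x, hx, y, hy, rfl⟩
  obtain ⟨hx₀, hx₁⟩ := middleCantor_subset_Icc ha₀ ha hx
  obtain ⟨hy₀, hy₁⟩ := middleCantor_subset_Icc hb₀ hb hy
  exact ⟨by positivity, add_le_add hx₁ (mul_le_of_le_one_right hs hy₁)⟩

lemma isCompact_scaledSum (ha : |a| < 1) (hb : |b| < 1) : IsCompact (scaledSum a b s) := by
  have himage : scaledSum a b s =
      (fun p : ℝ × ℝ ↦ p.1 + s * p.2) '' (middleCantor a ×ˢ middleCantor b) := by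
    ext z
    simp only [scaledSum, mem_ofPred_eq, mem_image, Prod.exists, mem_prod, and_assoc,
      exists_and_left, eq_comm]
  rw [himage]
  exact ((isCompact_middleCantor ha).prod (isCompact_middleCantor hb)).image (by fun_prop)

lemma mul_add_mem_scaledSum (ha : |a| < 1) (ha₀ : a ≠ 0) (hc : c ∈ ({0, 1 - a} : Set ℝ))
    (hz : z ∈ scaledSum a b (s / a)) : a * z + c ∈ scaledSum a b s := by
  obtain ⟨x, hx, y, hy, rfl⟩ := hz
  refine ⟨a * x + c, (mem_middleCantor_iff_exists_mul_add ha).2 ⟨c, hc, x, hx, rfl⟩, y, hy, ?_⟩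
  field_simp
  ring

lemma add_mul_mem_scaledSum (hb : |b| < 1) (hc : c ∈ ({0, 1 - b} : Set ℝ))
    (hz : z ∈ scaledSum a b (b * s)) : z + s * c ∈ scaledSum a b s := by
  obtain ⟨x, hx, y, hy, rfl⟩ := hz
  exact ⟨x, hx, b * y + c, (mem_middleCantor_iff_exists_mul_add hb).2 ⟨c, hc, y, hy, rfl⟩, by ring⟩

end ScaledSum

/-- Every point of the hull `[0, 1 + s]` of `C_a + s C_b` is at distance at most `√(s * r)` from a
point of the sum. The normalization by `s` makes `r` contract when either Cantor set is split. -/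
def HullApprox (a b s r : ℝ) : Prop :=
  ∀ t ∈ Icc 0 (1 + s), ∃ z ∈ scaledSum a b s, (t - z) ^ 2 ≤ s * r

namespace HullApprox

variable {a b s r r' : ℝ}

lemma mono (h : HullApprox a b s r) (hs : 0 ≤ s) (hr : r ≤ r') : HullApprox a b s r' := by
  intro t ht
  obtain ⟨z, hz, hle⟩ := h t ht
  exact ⟨z, hz, hle.trans (mul_le_mul_of_nonneg_left hr hs)⟩

lemma of_sq_le (h : (1 + s) ^ 2 ≤ s * r) : HullApprox a b s r := by
  rintro t ⟨ht₀, ht₁⟩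
  refine ⟨0, zero_mem_scaledSum, ?_⟩
  rw [sub_zero]
  exact (pow_le_pow_left₀ ht₀ ht₁ 2).trans h

lemma of_div (ha₀ : 0 < a) (ha : a < 1) (hs : 1 - 2 * a ≤ s) (h : HullApprox a b (s / a) r) :
    HullApprox a b s (a * r) := by
  rintro t ⟨ht₀, ht₁⟩
  obtain ⟨c, hc, hct, htc⟩ : ∃ c ∈ ({0, 1 - a} : Set ℝ), c ≤ t ∧ t ≤ c + a + s := by
    rcases le_total t (a + s) with hle | hle
    · exact ⟨0, .inl rfl, ht₀, by linarith⟩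
    · exact ⟨1 - a, .inr rfl, by linarith, by linarith⟩
  obtain ⟨z, hz, hle⟩ := h ((t - c) / a) ⟨div_nonneg (sub_nonneg.2 hct) ha₀.le, by
    rw [one_add_div ha₀.ne']; gcongr; linarith⟩
  refine ⟨a * z + c, mul_add_mem_scaledSum (by rwa [abs_of_pos ha₀]) ha₀.ne' hc hz, ?_⟩
  calc (t - (a * z + c)) ^ 2 = a ^ 2 * ((t - c) / a - z) ^ 2 := by field_simp; ring
    _ ≤ a ^ 2 * (s / a * r) := by gcongr
    _ = s * (a * r) := by field_simp

lemma of_mul (hb₀ : 0 ≤ b) (hb : b < 1) (hs : s * (1 - 2 * b) ≤ 1)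
    (h : HullApprox a b (b * s) r) : HullApprox a b s (b * r) := by
  rintro t ⟨ht₀, ht₁⟩
  obtain ⟨c, hc, hct, htc⟩ : ∃ c ∈ ({0, 1 - b} : Set ℝ), s * c ≤ t ∧ t ≤ s * c + 1 + b * s := by
    rcases le_total t (1 + b * s) with hle | hle
    · exact ⟨0, .inl rfl, by linarith, by linarith⟩
    · exact ⟨1 - b, .inr rfl, by linarith, by linarith⟩
  obtain ⟨z, hz, hle⟩ := h (t - s * c) ⟨sub_nonneg.2 hct, by linarith⟩
  refine ⟨z + s * c, add_mul_mem_scaledSum (by rwa [abs_of_nonneg hb₀]) hc hz, ?_⟩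
  calc (t - (z + s * c)) ^ 2 = (t - s * c - z) ^ 2 := by ring
    _ ≤ b * s * r := hle
    _ = s * (b * r) := by ring

lemma Icc_subset_scaledSum (ha : |a| < 1) (hb : |b| < 1) (hs : 0 < s)
    (h : ∀ r > 0, HullApprox a b s r) : Icc 0 (1 + s) ⊆ scaledSum a b s := by
  intro t ht
  rw [← (isCompact_scaledSum ha hb).isClosed.closure_eq, Metric.mem_closure_iff]
  intro δ hδ
  obtain ⟨z, hz, hle⟩ := h ((δ / 2) ^ 2 / s) (by positivity) t ht
  rw [mul_div_cancel₀ _ hs.ne'] at hle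
  refine ⟨z, hz, ?_⟩
  rw [Real.dist_eq]
  linarith [abs_le_of_sq_le_sq hle (half_pos hδ).le]

end HullApprox

section Renormalization

variable {a b m M : ℝ} {S : Set ℝ}

lemma hullApprox_mul_pow (ha₀ : 0 < a) (ha : a < 1) (hb₀ : 0 ≤ b) (hb : b < 1) (hm : 0 < m)
    (hS : S ⊆ Icc m M)
    (hsplit : ∀ s ∈ S, (1 - 2 * a ≤ s ∧ s / a ∈ S) ∨ (s * (1 - 2 * b) ≤ 1 ∧ b * s ∈ S)) (N : ℕ) :
    ∀ s ∈ S, HullApprox a b s ((1 + M) ^ 2 / m * max a b ^ N) := by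
  induction N with
  | zero =>
    intro s hs
    obtain ⟨hms, hsM⟩ := hS hs
    have hs₀ : 0 < s := hm.trans_le hms
    refine .of_sq_le ?_
    calc (1 + s) ^ 2 ≤ (1 + M) ^ 2 := by gcongr
      _ = m * ((1 + M) ^ 2 / m * max a b ^ 0) := by field_simp
      _ ≤ s * ((1 + M) ^ 2 / m * max a b ^ 0) := by gcongr
  | succ N ih =>
    intro s hs
    have hs₀ : 0 < s := hm.trans_le (hS hs).1
    set r := (1 + M) ^ 2 / m * max a b ^ N
    have hr : 0 ≤ r := by positivity
    suffices HullApprox a b s (max a b * r) by convert this using 1; ring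
    rcases hsplit s hs with ⟨hle, hmem⟩ | ⟨hle, hmem⟩
    · exact ((ih _ hmem).of_div ha₀ ha hle).mono hs₀.le
        (mul_le_mul_of_nonneg_right (le_max_left a b) hr)
    · exact ((ih _ hmem).of_mul hb₀ hb hle).mono hs₀.le
        (mul_le_mul_of_nonneg_right (le_max_right a b) hr)

theorem scaledSum_eq_Icc_of_splitting (ha₀ : 0 < a) (ha : a < 1) (hb₀ : 0 ≤ b) (hb : b < 1)
    (hm : 0 < m) (hS : S ⊆ Icc m M)
    (hsplit : ∀ s ∈ S, (1 - 2 * a ≤ s ∧ s / a ∈ S) ∨ (s * (1 - 2 * b) ≤ 1 ∧ b * s ∈ S))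
    {s : ℝ} (hs : s ∈ S) : scaledSum a b s = Icc 0 (1 + s) := by
  have hs₀ : 0 < s := hm.trans_le (hS hs).1
  refine (scaledSum_subset_Icc ha₀.le ha hb₀ hb hs₀.le).antisymm
    (HullApprox.Icc_subset_scaledSum (by rwa [abs_of_pos ha₀]) (by rwa [abs_of_nonneg hb₀]) hs₀
      fun r hr ↦ ?_)
  have htendsto := (tendsto_pow_atTop_nhds_zero_of_lt_one (le_max_of_le_left ha₀.le)
    (max_lt ha hb)).const_mul ((1 + M) ^ 2 / m)
  rw [mul_zero] at htendsto
  obtain ⟨N, hN⟩ := (htendsto.eventually_le_const hr).exists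
  exact (hullApprox_mul_pow ha₀ ha hb₀ hb hm hS hsplit N s hs).mono hs₀.le hN

end Renormalization

lemma exists_nat_mul_sub_mul_eq {p q : ℕ} (hp : 0 < p) (hq : 0 < q) (hpq : p.Coprime q) (j : ℤ) :
    ∃ k l : ℕ, p * k - q * l = j := by
  obtain ⟨y, hy⟩ := Int.mod_coprime hpq
  obtain ⟨k, hk⟩ : ∃ k : ℕ, (k : ℤ) = y * j % q + q * |j| :=
    ⟨_, Int.toNat_of_nonneg (add_nonneg (Int.emod_nonneg _ (by lia)) (by positivity))⟩
  have hj_le : j ≤ p * k := by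
    have hmod := Int.emod_nonneg (y * j) (b := q) (by lia)
    have habs := le_abs_self j
    have hj_mul : |j| ≤ q * |j| := le_mul_of_one_le_left (abs_nonneg j) (by exact_mod_cast hq)
    have hk_mul : (k : ℤ) ≤ p * k := le_mul_of_one_le_left (by positivity) (by exact_mod_cast hp)
    linarith
  have hdvd : (q : ℤ) ∣ p * k - j := by
    refine Int.ModEq.dvd ?_
    calc j = 1 * j := (one_mul j).symm
      _ ≡ p * y * j [ZMOD q] := hy.symm.mul_right j
      _ = p * (y * j) := mul_assoc _ _ _
      _ ≡ p * k [ZMOD q] := .mul_left p (by simp [hk, Int.ModEq])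
  obtain ⟨l, hl⟩ := hdvd
  lift l to ℕ using nonneg_of_mul_nonneg_right (by linarith) (by exact_mod_cast hq : (0 : ℤ) < q)
  exact ⟨k, l, by linarith⟩

section CommensurablePowers

variable {γ α β : ℝ} {n₀ m₀ : ℕ}

lemma zpow_mul_le_or_le_zpow_mul (hγ : 0 < γ) (hn₀ : 0 < n₀) (hm₀ : 0 < m₀)
    (hcop : n₀.Coprime m₀) (hα : α = γ ^ (-(n₀ : ℤ))) (hβ : β = γ ^ (-(m₀ : ℤ))) (hα₁ : α < 1)
    (hβ₁ : β < 1) (hfull : Icc 0 2 ⊆ sumSet α β) (j : ℤ) :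
    γ ^ j * (1 - 2 * β) ≤ α ∨ 1 - 2 * α ≤ γ ^ j * β := by
  have hα₀ : 0 < α := hα ▸ zpow_pos hγ _
  have hβ₀ : 0 < β := hβ ▸ zpow_pos hγ _
  obtain ⟨k, l, rfl⟩ := exists_nat_mul_sub_mul_eq hn₀ hm₀ hcop j
  have hβl : β ^ l = α ^ k * γ ^ ((n₀ : ℤ) * k - m₀ * l) := by
    rw [hα, hβ, ← zpow_natCast, ← zpow_natCast, ← zpow_mul, ← zpow_mul, ← zpow_add₀ hγ.ne']
    congr 1
    ring
  have hαk : 0 < α ^ k := pow_pos hα₀ k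
  refine (le_or_le_of_Icc_subset_sumSet hα₀.le hα₁ hβ₀.le hβ₁ hfull k l).imp ?_ ?_
  all_goals
    rw [pow_succ, hβl, mul_assoc]
    exact fun h ↦ le_of_mul_le_mul_left h hαk

lemma exists_zpow_window (hγ : 0 < γ) (hn₀ : 0 < n₀) (hα : α = γ ^ (-(n₀ : ℤ)))
    (hβ : β = γ ^ (-(m₀ : ℤ)))
    (hdich : ∀ j : ℤ, γ ^ j * (1 - 2 * β) ≤ α ∨ 1 - 2 * α ≤ γ ^ j * β) :
    ∃ n : ℤ, -(m₀ : ℤ) + 1 ≤ n ∧ n ≤ n₀ ∧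
      γ ^ (-n) * (1 - 2 * β) ≤ α ∧ 1 - 2 * α ≤ γ ^ (1 - n) * β := by
  have hα₀ : 0 < α := hα ▸ zpow_pos hγ _
  have hβ₀ : 0 < β := hβ ▸ zpow_pos hγ _
  have hn₀_mem : γ ^ (-(n₀ : ℤ)) * (1 - 2 * β) ≤ α := by
    rw [← hα]
    exact mul_le_of_le_one_right hα₀.le (by linarith)
  obtain ⟨n, ⟨hm₀n, hn⟩, hleast⟩ := Int.exists_least_of_bdd
    (P := fun n ↦ -(m₀ : ℤ) + 1 ≤ n ∧ γ ^ (-n) * (1 - 2 * β) ≤ α)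
    ⟨_, fun n hn ↦ hn.1⟩ ⟨n₀, by lia, hn₀_mem⟩
  refine ⟨n, hm₀n, hleast n₀ ⟨by lia, hn₀_mem⟩, hn, ?_⟩
  rcases hm₀n.eq_or_lt with rfl | hlt
  · rw [hβ, ← zpow_add₀ hγ.ne']
    simp only [sub_add_cancel_right, neg_neg, add_neg_cancel, zpow_zero]
    linarith
  · refine (hdich (1 - n)).resolve_left fun hle ↦ ?_
    have := hleast (n - 1) ⟨by lia, by rwa [neg_sub]⟩
    lia

theorem sumSet_eq_Icc_of_zpow_window (hγ : 1 ≤ γ) (hα : α = γ ^ (-(n₀ : ℤ)))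
    (hβ : β = γ ^ (-(m₀ : ℤ))) (hα₁ : α < 1) (hβ₁ : β < 1) {n : ℤ}
    (hm₀n : -(m₀ : ℤ) + 1 ≤ n) (hnn₀ : n ≤ n₀) (hlow : γ ^ (-n) * (1 - 2 * β) ≤ α)
    (hhigh : 1 - 2 * α ≤ γ ^ (1 - n) * β) : sumSet α β = Icc 0 2 := by
  have hγ₀ : 0 < γ := zero_lt_one.trans_le hγ
  have hα₀ : 0 < α := hα ▸ zpow_pos hγ₀ _
  have hβ₀ : 0 < β := hβ ▸ zpow_pos hγ₀ _
  have hdiv (j : ℤ) : γ ^ j / α = γ ^ (j + n₀) := by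
    rw [hα, zpow_neg, div_inv_eq_mul, zpow_add₀ hγ₀.ne']
  have hmul (j : ℤ) : β * γ ^ j = γ ^ (j - m₀) := by
    rw [hβ, ← zpow_add₀ hγ₀.ne', neg_add_eq_sub]
  set S : Set ℝ := (γ ^ ·) '' Icc (1 - n - m₀) (n₀ - n)
  have hS : S ⊆ Icc (γ ^ (1 - n - m₀)) (γ ^ (n₀ - n)) :=
    image_subset_iff.2 fun j hj ↦ ⟨zpow_le_zpow_right₀ hγ hj.1, zpow_le_zpow_right₀ hγ hj.2⟩
  have hsplit : ∀ s ∈ S, (1 - 2 * α ≤ s ∧ s / α ∈ S) ∨ (s * (1 - 2 * β) ≤ 1 ∧ β * s ∈ S) := by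
    rintro _ ⟨j, hj, rfl⟩
    obtain ⟨hj₀, hj₁⟩ := hj
    rcases le_or_gt j (-n) with hjn | hjn
    · refine .inl ⟨?_, j + n₀, ⟨by lia, by lia⟩, (hdiv j).symm⟩
      calc 1 - 2 * α ≤ β * γ ^ (1 - n) := hhigh.trans_eq (mul_comm _ _)
        _ = γ ^ (1 - n - m₀) := hmul _
        _ ≤ γ ^ j := zpow_le_zpow_right₀ hγ hj₀
    · refine .inr ⟨?_, j - m₀, ⟨by lia, by lia⟩, (hmul j).symm⟩
      calc γ ^ j * (1 - 2 * β) = γ ^ (j + n) * (γ ^ (-n) * (1 - 2 * β)) := by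
            rw [← mul_assoc, ← zpow_add₀ hγ₀.ne', add_neg_cancel_right]
        _ ≤ γ ^ (j + n) * α := by gcongr
        _ = γ ^ (j + n - n₀) := by rw [hα, ← zpow_add₀ hγ₀.ne', sub_eq_add_neg]
        _ ≤ 1 := zpow_le_one_of_nonpos₀ hγ (by lia)
  have h1 : (1 : ℝ) ∈ S := ⟨0, ⟨by lia, by lia⟩, zpow_zero γ⟩
  rw [← scaledSum_one,
    scaledSum_eq_Icc_of_splitting hα₀ hα₁ hβ₀.le hβ₁ (zpow_pos hγ₀ _) hS hsplit h1]
  norm_num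

end CommensurablePowers

section LogBounds

variable {γ x y : ℝ}

lemma log_div_div_log_le_iff (hγ : 1 < γ) (hx : 0 < x) (hy : 0 < y) (n : ℤ) :
    Real.log (x / y) / Real.log γ ≤ n ↔ γ ^ (-n) * x ≤ y := by
  have hγn : 0 < γ ^ n := zpow_pos (zero_lt_one.trans hγ) n
  rw [Real.log_div_log, Real.logb_le_iff_le_rpow hγ (div_pos hx hy), Real.rpow_intCast,
    div_le_iff₀ hy, zpow_neg, inv_mul_le_iff₀ hγn]

lemma le_one_sub_log_div_div_log_iff (hγ : 1 < γ) (hx : 0 < x) (hy : 0 < y) (n : ℤ) :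
    (n : ℝ) ≤ 1 - Real.log (x / y) / Real.log γ ↔ x ≤ γ ^ (1 - n) * y := by
  rw [le_sub_comm, Real.log_div_log, Real.logb_le_iff_le_rpow hγ (div_pos hx hy),
    div_le_iff₀ hy, ← Real.rpow_intCast, Int.cast_sub, Int.cast_one]

end LogBounds

theorem stmt13_general (γ : ℝ) (hγ : 1 < γ) (n₀ m₀ : ℕ) (hcop : Nat.Coprime n₀ m₀) (α β : ℝ)
    (hαdef : α = γ ^ (-(n₀ : ℤ))) (hβdef : β = γ ^ (-(m₀ : ℤ)))
    (hα : α < 1 / 2) (hβ : β < 1 / 2) :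
    sumSet α β = Set.Icc 0 2 ↔
      ∃ n : ℤ, -(m₀ : ℤ) + 1 ≤ n ∧ n ≤ (n₀ : ℤ) ∧
        Real.log ((1 - 2 * β) / α) / Real.log γ ≤ (n : ℝ) ∧
        (n : ℝ) ≤ 1 - Real.log ((1 - 2 * α) / β) / Real.log γ := by
  have hγ₀ : 0 < γ := zero_lt_one.trans hγ
  have hα₀ : 0 < α := hαdef ▸ zpow_pos hγ₀ _
  have hβ₀ : 0 < β := hβdef ▸ zpow_pos hγ₀ _
  have hn₀ : 0 < n₀ := by
    refine Nat.pos_of_ne_zero fun h ↦ ?_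
    norm_num [hαdef, h] at hα
  have hm₀ : 0 < m₀ := by
    refine Nat.pos_of_ne_zero fun h ↦ ?_
    norm_num [hβdef, h] at hβ
  simp only [log_div_div_log_le_iff hγ (by linarith : 0 < 1 - 2 * β) hα₀,
    le_one_sub_log_div_div_log_iff hγ (by linarith : 0 < 1 - 2 * α) hβ₀]
  have hα₁ : α < 1 := by linarith
  have hβ₁ : β < 1 := by linarith
  constructor
  · exact fun hfull ↦ exists_zpow_window hγ₀ hn₀ hαdef hβdef
      (zpow_mul_le_or_le_zpow_mul hγ₀ hn₀ hm₀ hcop hαdef hβdef hα₁ hβ₁ hfull.ge)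
  · rintro ⟨n, hm₀n, hnn₀, hlow, hhigh⟩
    exact sumSet_eq_Icc_of_zpow_window hγ.le hαdef hβdef hα₁ hβ₁ hm₀n hnn₀ hlow hhigh

theorem stmt13 (γ : ℝ) (hγ : 1 < γ) (n₀ m₀ : ℕ) (hn₀ : 0 < n₀) (hm₀ : 0 < m₀)
    (hcop : Nat.Coprime n₀ m₀) (α β : ℝ)
    (hαdef : α = γ ^ (-(n₀ : ℤ))) (hβdef : β = γ ^ (-(m₀ : ℤ)))
    (hα0 : 0 < α) (hα : α < 1 / 2) (hβ0 : 0 < β) (hβ : β < 1 / 2)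
    (hτ : (α / (1 - 2 * α)) * (β / (1 - 2 * β)) < 1) :
    sumSet α β = Set.Icc 0 2 ↔
      ∃ n : ℤ, -(m₀ : ℤ) + 1 ≤ n ∧ n ≤ (n₀ : ℤ) ∧
        Real.log ((1 - 2 * β) / α) / Real.log γ ≤ (n : ℝ) ∧
        (n : ℝ) ≤ 1 - Real.log ((1 - 2 * α) / β) / Real.log γ :=
  stmt13_general γ hγ n₀ m₀ hcop α β hαdef hβdef hα hβ
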